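/- Fix a finite number of channel uses k ≥ 1. Suppose the DMC admits inputs x₀, x₁ ∈ 𝒳 and an output y* ∈ 𝒴 with Γ_{Y|X}(y*|x₀) > 0 and Γ_{Y|X}(y*|x₁) = 0, and let ε ≥ (1 − Γ_{Y|X}(y*|x₀))^k. Then every θ < min{ D(π_{UV} ‖ Q_{UV}) : π_{UV} a pmf on 𝒰×𝒱 with π_U = P_U and π_V = P_V } is ε-achievable using exactly k channel uses at every blocklength n: there exist schemes (f^{(n)}, g^{(n)}) with k channel uses satisfying limsup_n α_n ≤ ε and liminf_n −(1/n) log₂ β_n ≥ θ. -/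

import Mathlib

open Filter

/-- Base-2 Kullback–Leibler divergence between two pmfs on a finite alphabet. -/
noncomputable def klDiv2 {A : Type} [Fintype A] (p q : A → ℝ) : ℝ :=
  ∑ a, p a * Real.logb 2 (p a / q a)

/-- `p` is a probability mass function on the finite alphabet `A`. -/
def IsPMF {A : Type} [Fintype A] (p : A → ℝ) : Prop :=
  (∀ a, 0 ≤ p a) ∧ ∑ a, p a = 1

/-- `𝒰`-marginal of a joint pmf on `U × V`. -/
noncomputable def margU {U V : Type} [Fintype U] [Fintype V] (p : U × V → ℝ) (u : U) : ℝ :=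
  ∑ v, p (u, v)

/-- `𝒱`-marginal of a joint pmf on `U × V`. -/
noncomputable def margV {U V : Type} [Fintype U] [Fintype V] (p : U × V → ℝ) (v : V) : ℝ :=
  ∑ u, p (u, v)

/-- Probability, under source law `R` (i.i.d. over `n` samples) and DMC `Γ`
(memoryless over `k` uses, input `f u`), that the decision `g v y` equals `b`.
Here `b = true` encodes `Ĥ = 1` and `b = false` encodes `Ĥ = 0`. -/
noncomputable def decProb {U V X Y : Type} [Fintype U] [Fintype V] [Fintype X] [Fintype Y]
    (R : U × V → ℝ) (Γ : X → Y → ℝ) {n k : ℕ}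
    (f : (Fin n → U) → Fin k → X) (g : (Fin n → V) → (Fin k → Y) → Bool) (b : Bool) : ℝ :=
  ∑ u : Fin n → U, ∑ v : Fin n → V, ∑ y : Fin k → Y,
    (∏ i, R (u i, v i)) * (∏ j, Γ (f u j) (y j)) * (if g v y = b then 1 else 0)

/-- The set of `ε`-achievable type-II (miss-detection) error exponents with a
sublinear number of channel uses. -/
noncomputable def steinSetSublin {U V X Y : Type} [Fintype U] [Fintype V] [Fintype X] [Fintype Y]
    (P Q : U × V → ℝ) (Γ : X → Y → ℝ) (ε : ℝ) : Set ℝ :=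
  {θ | 0 < θ ∧ ∃ (k : ℕ → ℕ)
      (f : ∀ n, (Fin n → U) → Fin (k n) → X)
      (g : ∀ n, (Fin n → V) → (Fin (k n) → Y) → Bool),
      Tendsto (fun n => (k n : ℝ)) atTop atTop ∧
      Tendsto (fun n => (k n : ℝ) / (n : ℝ)) atTop (nhds 0) ∧
      limsup (fun n : ℕ => decProb P Γ (f n) (g n) true) atTop ≤ ε ∧
      θ ≤ liminf (fun n : ℕ => -(1 / (n : ℝ)) * Real.logb 2 (decProb Q Γ (f n) (g n) false)) atTop}

/-- Minimum of `D(π‖Q)` over all pmfs `π` on `U × V` with prescribed marginals. -/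
noncomputable def minDivMarg {U V : Type} [Fintype U] [Fintype V]
    (Q : U × V → ℝ) (pU : U → ℝ) (pV : V → ℝ) : ℝ :=
  sInf {d | ∃ π : U × V → ℝ, IsPMF π ∧
    (∀ u, margU π u = pU u) ∧ (∀ v, margV π v = pV v) ∧ d = klDiv2 π Q}

/-!
By compactness, a joint type whose marginals are close to `P_U` and `P_V` has divergence from `Q`
greater than `θ`, so by the method of types the pairs of strings whose types are close to `P_U` and
`P_V` respectively have `Q`-probability at most `2 ^ (-n θ)`; under `P` their probability tends
to `1`.

The encoder reports whether its string is typical by repeating `x₀` if so and `x₁` otherwise. Since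
`x₁` never produces `y*`, a decoder that accepts only when it sees `y*` and its own string is
typical accepts, under either hypothesis, with probability exactly `1 - (1 - Γ(y*|x₀)) ^ k` times
that of both strings being typical. The missed flag thus costs `(1 - Γ(y*|x₀)) ^ k` in type-I error
and nothing in the type-II exponent.
-/

open MeasureTheory ProbabilityTheory Topology

namespace IsPMF

variable {A : Type} [Fintype A] {R : A → ℝ}

lemma le_one (hR : IsPMF R) (a : A) : R a ≤ 1 :=
  hR.2 ▸ Finset.single_le_sum (fun b _ => hR.1 b) (Finset.mem_univ a)

lemma sum_prod_eq_one {n : ℕ} {p : Fin n → A → ℝ} (hp : ∀ i, IsPMF (p i)) :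
    ∑ w : Fin n → A, ∏ i, p i (w i) = 1 := by
  classical
  have h := Finset.prod_univ_sum (fun _ : Fin n => (Finset.univ : Finset A)) p
  rw [Fintype.piFinset_univ] at h
  rw [← h]
  exact Finset.prod_eq_one fun i _ => (hp i).2

/-- A real-valued pmf as a `PMF`, which makes Mathlib's measure theory available for it. -/
noncomputable def toPMF (hR : IsPMF R) : PMF A :=
  PMF.ofFintype (fun a => ENNReal.ofReal (R a)) <| by
    rw [← ENNReal.ofReal_sum_of_nonneg fun a _ => hR.1 a, hR.2, ENNReal.ofReal_one]

lemma measureReal_singleton [MeasurableSpace A] [MeasurableSingletonClass A] (hR : IsPMF R)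
    (a : A) : hR.toPMF.toMeasure.real {a} = R a := by
  rw [measureReal_def, PMF.toMeasure_apply_singleton _ _ (measurableSet_singleton a), toPMF,
    PMF.ofFintype_apply, ENNReal.toReal_ofReal (hR.1 a)]

end IsPMF

section IidProb

variable {A : Type*} [Fintype A] {n : ℕ} {R : A → ℝ}

/-- The probability that a string of `n` letters, i.i.d. with weights `R`, lies in `S`. The weights
need not be normalised. -/
noncomputable def iidProb (R : A → ℝ) (S : Set (Fin n → A)) : ℝ :=
  ∑ w, S.indicator (fun w => ∏ i, R (w i)) w

lemma iidProb_nonneg (hR : ∀ a, 0 ≤ R a) (S : Set (Fin n → A)) : 0 ≤ iidProb R S :=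
  Finset.sum_nonneg fun w _ =>
    Set.indicator_nonneg (fun _ _ => Finset.prod_nonneg fun _ _ => hR _) w

lemma nonempty_of_iidProb_ne_zero {S : Set (Fin n → A)} (h : iidProb R S ≠ 0) : S.Nonempty := by
  rw [Set.nonempty_iff_ne_empty]
  rintro rfl
  simp [iidProb] at h

lemma iidProb_setOf_forall_mem (R : A → ℝ) (n : ℕ) (s : Set A) :
    iidProb R {w : Fin n → A | ∀ i, w i ∈ s} = (∑ a, s.indicator R a) ^ n := by
  classical
  rw [Fintype.sum_pow]
  refine Finset.sum_congr rfl fun w _ => ?_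
  simp only [Set.indicator_apply, Set.mem_ofPred_eq, Finset.prod_ite_zero, Finset.mem_univ,
    forall_const]

lemma pow_le_iidProb {q : ℝ} (hq : 0 ≤ q) (hR : ∀ a, q ≤ R a) {S : Set (Fin n → A)}
    (hS : S.Nonempty) : q ^ n ≤ iidProb R S := by
  obtain ⟨w, hw⟩ := hS
  calc q ^ n = ∏ _i : Fin n, q := by simp
    _ ≤ ∏ i, R (w i) := Finset.prod_le_prod (fun _ _ => hq) fun i _ => hR (w i)
    _ = S.indicator (fun w => ∏ i, R (w i)) w := by rw [Set.indicator_of_mem hw]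
    _ ≤ iidProb R S := Finset.single_le_sum
        (f := S.indicator fun w : Fin n → A => ∏ i, R (w i))
        (fun v _ => Set.indicator_nonneg
          (fun v _ => Finset.prod_nonneg fun i _ => hq.trans (hR (v i))) v) (Finset.mem_univ w)

end IidProb

section IidProbPMF

variable {A : Type} [Fintype A] {n : ℕ} {R : A → ℝ}

lemma iidProb_add_iidProb_compl (hR : IsPMF R) (S : Set (Fin n → A)) :
    iidProb R S + iidProb R Sᶜ = 1 := by
  simp only [iidProb, ← Finset.sum_add_distrib, Set.indicator_self_add_compl_apply,
    IsPMF.sum_prod_eq_one fun _ => hR]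

lemma iidProb_setOf_exists_eq (hR : IsPMF R) (n : ℕ) (a : A) :
    iidProb R {w : Fin n → A | ∃ i, w i = a} = 1 - (1 - R a) ^ n := by
  classical
  have hsum : ∑ b, ({a}ᶜ : Set A).indicator R b = 1 - R a := by
    simp only [Set.indicator_compl, Pi.sub_apply, Finset.sum_sub_distrib, hR.2]
    simp [Set.indicator_apply]
  have hcompl : {w : Fin n → A | ∃ i, w i = a}ᶜ = {w | ∀ i, w i ∈ ({a}ᶜ : Set A)} := by
    ext w; simp
  rw [← hsum, ← iidProb_setOf_forall_mem, ← hcompl,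
    ← iidProb_add_iidProb_compl hR {w : Fin n → A | ∃ i, w i = a}, add_sub_cancel_right]

lemma measureReal_pi_eq_iidProb [MeasurableSpace A] [MeasurableSingletonClass A] (hR : IsPMF R)
    (S : Set (Fin n → A)) :
    (Measure.pi fun _ : Fin n => hR.toPMF.toMeasure).real S = iidProb R S := by
  classical
  have hsingle (w : Fin n → A) :
      (Measure.pi fun _ : Fin n => hR.toPMF.toMeasure).real {w} = ∏ i, R (w i) := by
    simp only [measureReal_def, Measure.pi_singleton, ENNReal.toReal_prod]
    exact Finset.prod_congr rfl fun i _ => hR.measureReal_singleton _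
  have hS : S = (Finset.univ.filter (· ∈ S) : Finset (Fin n → A)) := by simp
  conv_lhs => rw [hS, ← sum_measureReal_singleton]
  simp only [hsingle, iidProb, Set.indicator_apply, Finset.sum_filter]

end IidProbPMF

section Empirical

variable {A : Type*} {n : ℕ}

open Classical in
/-- The type (empirical distribution) of the string `w`. It is identically `0` for the empty
string. -/
noncomputable def empirical (w : Fin n → A) (a : A) : ℝ :=
  (Finset.univ.filter fun i => w i = a).card / n

lemma empirical_nonneg (w : Fin n → A) (a : A) : 0 ≤ empirical w a := by
  unfold empirical; positivity

lemma empirical_apply_pos (w : Fin n → A) (i : Fin n) : 0 < empirical w (w i) := by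
  classical
  have hn : 0 < n := i.pos
  have hcard : 0 < (Finset.univ.filter fun j => w j = w i).card := Finset.card_pos.2 ⟨i, by simp⟩
  unfold empirical
  positivity

lemma empirical_eq_sum_indicator (w : Fin n → A) (a : A) :
    empirical w a = (∑ i, ({a} : Set A).indicator 1 (w i)) / n := by
  classical
  simp [empirical, Set.indicator_apply]

variable [Fintype A]

lemma sum_empirical_mul (w : Fin n → A) (φ : A → ℝ) :
    n * ∑ a, empirical w a * φ a = ∑ i, φ (w i) := by
  classical
  rcases eq_or_ne n 0 with rfl | hn
  · simp
  have hn' : (n : ℝ) ≠ 0 := Nat.cast_ne_zero.2 hn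
  rw [← Finset.sum_fiberwise' Finset.univ w φ, Finset.mul_sum]
  refine Finset.sum_congr rfl fun a _ => ?_
  rw [empirical, Finset.sum_const, nsmul_eq_mul]
  field_simp

lemma sum_empirical (hn : n ≠ 0) (w : Fin n → A) : ∑ a, empirical w a = 1 := by
  have h := sum_empirical_mul w fun _ => 1
  have hn' : (n : ℝ) ≠ 0 := Nat.cast_ne_zero.2 hn
  simpa [hn'] using h

lemma card_image_empirical_le [DecidableEq (A → ℝ)] (n : ℕ) :
    (Finset.univ.image (empirical : (Fin n → A) → A → ℝ)).card ≤ (n + 1) ^ Fintype.card A := by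
  classical
  have hsub : Finset.univ.image (empirical : (Fin n → A) → A → ℝ) ⊆
      Finset.univ.image fun (c : A → Fin (n + 1)) a => (c a : ℝ) / n := by
    refine Finset.image_subset_iff.2 fun w _ => Finset.mem_image.2
      ⟨fun a => ⟨(Finset.univ.filter fun i => w i = a).card, ?_⟩, Finset.mem_univ _, ?_⟩
    · exact Nat.lt_succ_of_le ((Finset.card_le_univ _).trans_eq (Fintype.card_fin n))
    · rfl
  calc _ ≤ _ := Finset.card_le_card hsub
    _ ≤ Fintype.card (A → Fin (n + 1)) := Finset.card_image_le
    _ = (n + 1) ^ Fintype.card A := by simp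

/- Each string's maximum-likelihood weight occurs in the total mass `1` of the product measure
generated by its type, so the sum is at most the number of types. -/
lemma sum_prod_empirical_le (hn : n ≠ 0) :
    ∑ w : Fin n → A, ∏ i, empirical w (w i) ≤ (n + 1 : ℝ) ^ Fintype.card A := by
  classical
  let types : Finset (A → ℝ) := Finset.univ.image (empirical : (Fin n → A) → A → ℝ)
  have hnonneg : ∀ π ∈ types, ∀ a, 0 ≤ π a := by
    simpa [types] using fun w : Fin n → A => empirical_nonneg w
  have hmass : ∀ π ∈ types, ∑ w : Fin n → A, ∏ i, π (w i) = 1 := by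
    simpa [types, ← Fintype.sum_pow] using fun w : Fin n → A => by rw [sum_empirical hn w, one_pow]
  calc ∑ w : Fin n → A, ∏ i, empirical w (w i)
      ≤ ∑ w : Fin n → A, ∑ π ∈ types, ∏ i, π (w i) := by
        gcongr with w
        exact Finset.single_le_sum (f := fun π : A → ℝ => ∏ i, π (w i))
          (fun π hπ => Finset.prod_nonneg fun i _ => hnonneg π hπ _)
          (Finset.mem_image_of_mem _ (Finset.mem_univ w))
    _ = types.card := by
        rw [Finset.sum_comm, Finset.sum_congr rfl hmass, Finset.sum_const, nsmul_one]
    _ ≤ (n + 1 : ℝ) ^ Fintype.card A := mod_cast card_image_empirical_le n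

end Empirical

lemma isPMF_empirical {A : Type} [Fintype A] {n : ℕ} (hn : n ≠ 0) (w : Fin n → A) :
    IsPMF (empirical w) :=
  ⟨empirical_nonneg w, sum_empirical hn w⟩

lemma margU_empirical {U V : Type} [Fintype U] [Fintype V] {n : ℕ} (w : Fin n → U × V) :
    margU (empirical w) = empirical fun i => (w i).1 := by
  classical
  funext u
  simp only [margU, empirical, ← Finset.sum_div, ← Nat.cast_sum]
  congr 2
  rw [Finset.card_eq_sum_card_fiberwise (f := fun i => (w i).2) (t := Finset.univ) (by simp)]
  simp only [Finset.filter_filter, Prod.ext_iff]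

lemma margV_empirical {U V : Type} [Fintype U] [Fintype V] {n : ℕ} (w : Fin n → U × V) :
    margV (empirical w) = empirical fun i => (w i).2 := by
  classical
  funext v
  simp only [margV, empirical, ← Finset.sum_div, ← Nat.cast_sum]
  congr 2
  rw [Finset.card_eq_sum_card_fiberwise (f := fun i => (w i).1) (t := Finset.univ) (by simp)]
  simp only [Finset.filter_filter, Prod.ext_iff, and_comm]

section WeakLaw

variable {A : Type*} [MeasurableSpace A] {μ : Measure A} [IsProbabilityMeasure μ] {n : ℕ} {δ : ℝ}

lemma measureReal_pi_le_abs_average_sub_le {X : A → ℝ} (hX : MemLp X 2 μ) (hn : n ≠ 0)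
    (hδ : 0 < δ) :
    (Measure.pi fun _ : Fin n => μ).real {w | δ ≤ |(∑ i, X (w i)) / n - ∫ a, X a ∂μ|} ≤
      Var[X; μ] / δ ^ 2 / n := by
  let ν : Measure (Fin n → A) := Measure.pi fun _ => μ
  have hn_pos : (0 : ℝ) < n := Nat.cast_pos.2 (Nat.pos_of_ne_zero hn)
  let T : (Fin n → A) → ℝ := ∑ i, fun w => X (w i)
  have hXi (i : Fin n) : MemLp (fun w : Fin n → A => X (w i)) 2 ν :=
    hX.comp_measurePreserving (measurePreserving_eval _ i)
  have hT : MemLp T 2 ν := memLp_finsetSum' _ fun i _ => hXi i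
  have hT_mean : ∫ w, T w ∂ν = n * ∫ a, X a ∂μ := by
    simp only [T, Finset.sum_apply]
    rw [integral_finsetSum _ fun i _ => (hXi i).integrable one_le_two]
    simp only [ν, integral_comp_eval (μ := fun _ : Fin n => μ) hX.aestronglyMeasurable,
      Finset.sum_const, Finset.card_univ, Fintype.card_fin, nsmul_eq_mul]
  have hT_var : Var[T; ν] = n * Var[X; μ] := by
    rw [variance_sum_pi fun _ => hX]
    simp
  have hset : {w : Fin n → A | δ ≤ |(∑ i, X (w i)) / n - ∫ a, X a ∂μ|} =
      {w | n * δ ≤ |T w - ∫ w, T w ∂ν|} := by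
    ext w
    have : T w - n * ∫ a, X a ∂μ = n * ((∑ i, X (w i)) / n - ∫ a, X a ∂μ) := by
      simp only [T, Finset.sum_apply]
      field_simp
    simp only [Set.mem_ofPred_eq, hT_mean, this, abs_mul, Nat.abs_cast,
      mul_le_mul_iff_right₀ hn_pos]
  calc ν.real {w | δ ≤ |(∑ i, X (w i)) / n - ∫ a, X a ∂μ|}
      ≤ (ENNReal.ofReal (Var[T; ν] / (n * δ) ^ 2)).toReal := by
        rw [hset]
        exact ENNReal.toReal_mono ENNReal.ofReal_ne_top
          (meas_ge_le_variance_div_sq hT (by positivity))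
    _ = Var[T; ν] / (n * δ) ^ 2 :=
        ENNReal.toReal_ofReal (div_nonneg (variance_nonneg _ _) (sq_nonneg _))
    _ = Var[X; μ] / δ ^ 2 / n := by rw [hT_var]; field_simp

lemma tendsto_measureReal_pi_le_abs_empirical_sub [MeasurableSingletonClass A] (a : A)
    (hδ : 0 < δ) :
    Tendsto (fun n : ℕ => (Measure.pi fun _ : Fin n => μ).real
      {w | δ ≤ |empirical w a - μ.real {a}|}) atTop (𝓝 0) := by
  refine squeeze_zero' (Eventually.of_forall fun n => measureReal_nonneg) ?_
    (tendsto_const_div_atTop_nhds_zero_nat (Var[({a} : Set A).indicator 1; μ] / δ ^ 2))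
  filter_upwards [eventually_ne_atTop 0] with n hn
  simp only [empirical_eq_sum_indicator, ← integral_indicator_one (measurableSet_singleton a)]
  exact measureReal_pi_le_abs_average_sub_le
    (memLp_indicator_const 2 (measurableSet_singleton a) 1 (Or.inr (measure_ne_top μ _))) hn hδ

lemma tendsto_measureReal_pi_empirical_notMem [Finite A] [MeasurableSingletonClass A]
    {s : Set (A → ℝ)} (hs : s ∈ 𝓝 fun a => μ.real {a}) :
    Tendsto (fun n : ℕ => (Measure.pi fun _ : Fin n => μ).real {w | empirical w ∉ s}) atTop
      (𝓝 0) := by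
  cases nonempty_fintype A
  obtain ⟨δ, hδ, hball⟩ := Metric.mem_nhds_iff.1 hs
  have hsub (n : ℕ) : {w : Fin n → A | empirical w ∉ s} ⊆
      ⋃ a, {w | δ ≤ |empirical w a - μ.real {a}|} := by
    intro w hw
    by_contra! hclose
    simp only [Set.mem_iUnion, Set.mem_ofPred_eq, not_exists, not_le] at hclose
    exact hw (hball ((dist_pi_lt_iff hδ).2 hclose))
  refine squeeze_zero (fun n => measureReal_nonneg)
    (fun n => (measureReal_mono (hsub n)).trans (measureReal_iUnion_fintype_le _)) ?_
  simpa using tendsto_finsetSum Finset.univ fun a _ =>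
    tendsto_measureReal_pi_le_abs_empirical_sub (μ := μ) a hδ

end WeakLaw

lemma tendsto_iidProb_empirical_mem {A : Type} [Fintype A] {R : A → ℝ} (hR : IsPMF R)
    {s : Set (A → ℝ)} (hs : s ∈ 𝓝 R) :
    Tendsto (fun n : ℕ => iidProb R {w : Fin n → A | empirical w ∈ s}) atTop (𝓝 1) := by
  let : MeasurableSpace A := ⊤
  have hlaw : (fun a => hR.toPMF.toMeasure.real {a}) = R := funext hR.measureReal_singleton
  have h := tendsto_measureReal_pi_empirical_notMem (hlaw.symm ▸ hs)
  simp only [measureReal_pi_eq_iidProb hR] at h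
  have hcompl := h.const_sub 1
  rw [sub_zero] at hcompl
  refine hcompl.congr fun n => ?_
  rw [← iidProb_add_iidProb_compl hR {w : Fin n → A | empirical w ∈ s}]
  exact add_sub_cancel_right _ _

section MethodOfTypes

variable {A : Type} [Fintype A] {n : ℕ} {Q : A → ℝ}

lemma prod_eq_prod_empirical_mul_rpow (hQ : ∀ a, 0 < Q a) (w : Fin n → A) :
    ∏ i, Q (w i) = (∏ i, empirical w (w i)) * (2 : ℝ) ^ (-(n * klDiv2 (empirical w) Q)) := by
  rw [klDiv2, sum_empirical_mul, ← Finset.sum_neg_distrib, Real.rpow_sum_of_pos two_pos,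
    ← Finset.prod_mul_distrib]
  refine Finset.prod_congr rfl fun i _ => ?_
  have hemp := empirical_apply_pos w i
  have hQi := hQ (w i)
  rw [Real.rpow_neg two_pos.le, Real.rpow_logb two_pos (by norm_num) (by positivity)]
  field_simp

lemma iidProb_le_of_forall_le_klDiv2 (hQ : ∀ a, 0 < Q a) (hn : n ≠ 0) {S : Set (Fin n → A)}
    {θ : ℝ} (hS : ∀ w ∈ S, θ ≤ klDiv2 (empirical w) Q) :
    iidProb Q S ≤ (n + 1 : ℝ) ^ Fintype.card A * 2 ^ (-(n * θ)) := by
  have hle (w : Fin n → A) : S.indicator (fun w => ∏ i, Q (w i)) w ≤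
      (∏ i, empirical w (w i)) * 2 ^ (-(n * θ)) := by
    have hnonneg : 0 ≤ ∏ i, empirical w (w i) :=
      Finset.prod_nonneg fun i _ => empirical_nonneg w (w i)
    refine Set.indicator_apply_le' (fun hw => ?_) fun _ => by positivity
    rw [prod_eq_prod_empirical_mul_rpow hQ]
    gcongr
    · exact one_le_two
    · exact hS w hw
  calc iidProb Q S ≤ ∑ w : Fin n → A, (∏ i, empirical w (w i)) * 2 ^ (-(n * θ)) :=
        Finset.sum_le_sum fun w _ => hle w
    _ = (∑ w : Fin n → A, ∏ i, empirical w (w i)) * 2 ^ (-(n * θ)) := (Finset.sum_mul ..).symm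
    _ ≤ _ := by gcongr; exact sum_prod_empirical_le hn

lemma eventually_pow_mul_two_rpow_le (d : ℕ) {θ θ' : ℝ} (h : θ < θ') :
    ∀ᶠ n : ℕ in atTop, (n + 1 : ℝ) ^ d * 2 ^ (-(n * θ')) ≤ (2 : ℝ) ^ (-(n * θ)) := by
  let r : ℝ := 2 ^ (θ - θ')
  have hr : 0 < r := Real.rpow_pos_of_pos two_pos _
  have hr_one : r < 1 := Real.rpow_lt_one_of_one_lt_of_neg one_lt_two (sub_neg.2 h)
  have hlim := (tendsto_pow_const_mul_const_pow_of_lt_one d hr.le hr_one).comp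
    (tendsto_add_atTop_nat 1)
  filter_upwards [hlim.eventually (ge_mem_nhds hr)] with n hn
  have hle_one : (n + 1 : ℝ) ^ d * r ^ n ≤ 1 := by
    have : (n + 1 : ℝ) ^ d * r ^ n * r ≤ 1 * r := by
      simpa [pow_succ, mul_assoc] using hn
    exact le_of_mul_le_mul_right this hr
  have hsplit : (2 : ℝ) ^ (-(n * θ')) = r ^ n * 2 ^ (-(n * θ)) := by
    rw [← Real.rpow_mul_natCast two_pos.le, ← Real.rpow_add two_pos]
    ring_nf
  calc (n + 1 : ℝ) ^ d * 2 ^ (-(n * θ')) = (n + 1 : ℝ) ^ d * r ^ n * 2 ^ (-(n * θ)) := by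
        rw [hsplit, mul_assoc]
    _ ≤ 1 * 2 ^ (-(n * θ)) := by gcongr
    _ = 2 ^ (-(n * θ)) := one_mul _

lemma eventually_iidProb_le_two_rpow (hQ : ∀ a, 0 < Q a) {S : ∀ n, Set (Fin n → A)} {θ θ' : ℝ}
    (hθ : θ < θ') (hS : ∀ n, n ≠ 0 → ∀ w ∈ S n, θ' ≤ klDiv2 (empirical w) Q) :
    ∀ᶠ n : ℕ in atTop, iidProb Q (S n) ≤ 2 ^ (-(n * θ)) := by
  filter_upwards [eventually_ne_atTop 0, eventually_pow_mul_two_rpow_le (Fintype.card A) hθ]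
    with n hn hpow
  exact (iidProb_le_of_forall_le_klDiv2 hQ hn (hS n hn)).trans hpow

end MethodOfTypes

section Divergence

lemma continuous_klDiv2 {A : Type} [Fintype A] {Q : A → ℝ} (hQ : ∀ a, 0 < Q a) :
    Continuous fun π : A → ℝ => klDiv2 π Q := by
  have hlog (π : A → ℝ) (a : A) : π a * Real.logb 2 (π a / Q a) =
      (π a * Real.log (π a) - π a * Real.log (Q a)) / Real.log 2 := by
    rcases eq_or_ne (π a) 0 with h | h
    · simp [h]
    · rw [Real.logb, Real.log_div h (hQ a).ne']
      ring
  simp only [klDiv2, hlog]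
  refine continuous_finsetSum _ fun a _ => Continuous.div_const (.sub ?_ (by fun_prop)) _
  exact Real.continuous_mul_log.comp (continuous_apply a)

variable {U V : Type} [Fintype U] [Fintype V] {Q : U × V → ℝ}

lemma continuous_margU : Continuous (margU : (U × V → ℝ) → U → ℝ) := by
  unfold margU; fun_prop

lemma continuous_margV : Continuous (margV : (U × V → ℝ) → V → ℝ) := by
  unfold margV; fun_prop

lemma isCompact_setOf_isPMF (A : Type) [Fintype A] : IsCompact {π : A → ℝ | IsPMF π} :=
  isCompact_stdSimplex ℝ A

lemma minDivMarg_le_klDiv2 (hQ : ∀ p, 0 < Q p) {π : U × V → ℝ} (hπ : IsPMF π) :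
    minDivMarg Q (margU π) (margV π) ≤ klDiv2 π Q := by
  refine csInf_le ?_ ⟨π, hπ, fun _ => rfl, fun _ => rfl, rfl⟩
  refine ((isCompact_setOf_isPMF _).image (continuous_klDiv2 hQ)).bddBelow.mono ?_
  rintro d ⟨ρ, hρ, -, -, rfl⟩
  exact ⟨ρ, hρ, rfl⟩

lemma eventually_lt_klDiv2_of_lt_minDivMarg (hQ : ∀ p, 0 < Q p) {pU : U → ℝ} {pV : V → ℝ}
    {θ : ℝ} (hθ : θ < minDivMarg Q pU pV) :
    ∀ᶠ m in 𝓝 (pU, pV), ∀ π : U × V → ℝ, IsPMF π → (margU π, margV π) = m → θ < klDiv2 π Q := by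
  let simplex := {π : U × V → ℝ // IsPMF π}
  have : CompactSpace simplex := isCompact_iff_compactSpace.1 (isCompact_setOf_isPMF _)
  let margins : simplex → (U → ℝ) × (V → ℝ) := fun π => (margU π.1, margV π.1)
  have hclosed : IsClosedMap margins := Continuous.isClosedMap <|
    (continuous_margU.comp continuous_subtype_val).prodMk
      (continuous_margV.comp continuous_subtype_val)
  have hopen : IsOpen {π : simplex | θ < klDiv2 π.1 Q} :=
    isOpen_lt continuous_const ((continuous_klDiv2 hQ).comp continuous_subtype_val)
  have hfiber : ∀ π ∈ margins ⁻¹' {(pU, pV)}, ∀ᶠ ρ in 𝓝 π, θ < klDiv2 ρ.1 Q := by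
    rintro π hπ
    obtain ⟨rfl, rfl⟩ := Prod.mk.inj hπ
    exact hopen.mem_nhds (hθ.trans_le (minDivMarg_le_klDiv2 hQ π.2))
  filter_upwards [hclosed.eventually_nhds_fiber (pU, pV) hfiber] with m hm π hπ hmarg
  exact hm ⟨π, hπ⟩ hmarg

end Divergence

lemma le_liminf_neg_logb_div {β : ℕ → ℝ} {q θ : ℝ} (hq : 0 < q)
    (hlow : ∀ᶠ n in atTop, q ^ n ≤ β n) (hup : ∀ᶠ n : ℕ in atTop, β n ≤ 2 ^ (-(n * θ))) :
    θ ≤ liminf (fun n : ℕ => -(1 / (n : ℝ)) * Real.logb 2 (β n)) atTop := by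
  have hdiv (n : ℕ) : -(1 / (n : ℝ)) * Real.logb 2 (β n) = -Real.logb 2 (β n) / n := by ring
  simp only [hdiv]
  refine le_liminf_of_le
    (isBoundedUnder_of_eventually_le (a := -Real.logb 2 q) ?_).isCoboundedUnder_ge ?_
  · filter_upwards [hlow, eventually_gt_atTop 0] with n hn hn_pos
    have hlog := Real.logb_le_logb_of_le one_lt_two (pow_pos hq n) hn
    rw [Real.logb_pow] at hlog
    rw [div_le_iff₀ (Nat.cast_pos.2 hn_pos)]
    linarith
  · filter_upwards [hlow, hup, eventually_gt_atTop 0] with n hn_low hn_up hn_pos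
    have hlog := Real.logb_le_logb_of_le one_lt_two ((pow_pos hq n).trans_le hn_low) hn_up
    rw [Real.logb_rpow two_pos (by norm_num)] at hlog
    rw [le_div_iff₀ (Nat.cast_pos.2 hn_pos)]
    linarith

section Scheme

variable {U V X Y : Type} {n k : ℕ}

open Classical in
/-- The one-bit encoder with acceptance region `S`: it repeats `x₀` over all `k` channel uses if the
source string lies in `S`, and `x₁` otherwise. -/
noncomputable def flagEncoder (k : ℕ) (x₀ x₁ : X) (S : Set (Fin n → U)) (u : Fin n → U) :
    Fin k → X :=
  fun _ => if u ∈ S then x₀ else x₁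

open Classical in
/-- The test which declares the null hypothesis (`false`) exactly if its own source string lies in
`T` and the flag `b` occurs in the channel output. -/
noncomputable def flagDecoder (k : ℕ) (b : Y) (T : Set (Fin n → V)) (v : Fin n → V)
    (y : Fin k → Y) : Bool :=
  !decide (v ∈ T ∧ ∃ j, y j = b)

lemma flagDecoder_eq_false_iff {b : Y} {T : Set (Fin n → V)} {v : Fin n → V} {y : Fin k → Y} :
    flagDecoder k b T v y = false ↔ v ∈ T ∧ ∃ j, y j = b := by
  simp [flagDecoder]

/- An output flag rules out the input `x₁`, so acceptance forces the encoder's string into `S`, and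
then `b` occurs with probability `1 - (1 - Γ x₀ b) ^ k`. -/
lemma sum_flagEncoder_flagDecoder [Fintype Y] {x₀ x₁ : X} {Γ : X → Y → ℝ}
    (hΓ₀ : IsPMF (Γ x₀)) (hΓ₁ : IsPMF (Γ x₁)) {b : Y}
    (hb : Γ x₁ b = 0) (S : Set (Fin n → U)) (T : Set (Fin n → V)) (u : Fin n → U)
    (v : Fin n → V) :
    ∑ y : Fin k → Y, (∏ j, Γ (flagEncoder k x₀ x₁ S u j) (y j)) *
        (if flagDecoder k b T v y = false then 1 else 0) =
      (S ×ˢ T).indicator (fun _ => 1 - (1 - Γ x₀ b) ^ k) (u, v) := by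
  classical
  by_cases hv : v ∈ T
  swap
  · simp [flagDecoder_eq_false_iff, hv]
  have hhit {x : X} (hx : IsPMF (Γ x)) :
      ∑ y : Fin k → Y, (if ∃ j, y j = b then ∏ j, Γ x (y j) else 0) = 1 - (1 - Γ x b) ^ k := by
    rw [← iidProb_setOf_exists_eq hx]
    simp only [iidProb, Set.indicator_apply, Set.mem_ofPred_eq]
  by_cases hu : u ∈ S
  · simp [flagDecoder_eq_false_iff, flagEncoder, hu, hv, hhit hΓ₀]
  · simp [flagDecoder_eq_false_iff, flagEncoder, hu, hv, hhit hΓ₁, hb]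

lemma sum_sum_pair_eq_sum [Fintype U] [Fintype V] (F : (Fin n → U × V) → ℝ) :
    ∑ u : Fin n → U, ∑ v : Fin n → V, F (fun i => (u i, v i)) = ∑ w, F w := by
  rw [← Fintype.sum_prod_type']
  exact Fintype.sum_equiv (Equiv.arrowProdEquivProdArrow (Fin n) (fun _ => U) fun _ => V).symm
    _ _ fun _ => rfl

variable [Fintype U] [Fintype V] [Fintype X] [Fintype Y] {Γ : X → Y → ℝ}

lemma decProb_true_add_decProb_false {R : U × V → ℝ} (hR : IsPMF R) (hΓ : ∀ x, IsPMF (Γ x))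
    (f : (Fin n → U) → Fin k → X) (g : (Fin n → V) → (Fin k → Y) → Bool) :
    decProb R Γ f g true + decProb R Γ f g false = 1 := by
  have hbool (b : Bool) : ((if b = true then 1 else 0) + if b = false then 1 else 0 : ℝ) = 1 := by
    cases b <;> simp
  simp only [decProb, ← Finset.sum_add_distrib, ← mul_add, hbool, mul_one, ← Finset.mul_sum,
    IsPMF.sum_prod_eq_one fun _ => hΓ _]
  rw [sum_sum_pair_eq_sum fun w => ∏ i, R (w i)]
  exact IsPMF.sum_prod_eq_one fun _ => hR

lemma decProb_flag_false {x₀ x₁ : X} (hΓ₀ : IsPMF (Γ x₀)) (hΓ₁ : IsPMF (Γ x₁)) {b : Y}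
    (hb : Γ x₁ b = 0) (R : U × V → ℝ) (S : Set (Fin n → U)) (T : Set (Fin n → V)) :
    decProb R Γ (flagEncoder k x₀ x₁ S) (flagDecoder k b T) false =
      (1 - (1 - Γ x₀ b) ^ k) *
        iidProb R {w | (fun i => (w i).1) ∈ S ∧ (fun i => (w i).2) ∈ T} := by
  classical
  simp only [decProb, mul_assoc, ← Finset.mul_sum, sum_flagEncoder_flagDecoder hΓ₀ hΓ₁ hb]
  rw [sum_sum_pair_eq_sum fun w => (∏ i, R (w i)) * (S ×ˢ T).indicator
    (fun _ => 1 - (1 - Γ x₀ b) ^ k) (fun i => (w i).1, fun i => (w i).2), iidProb, Finset.mul_sum]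
  refine Finset.sum_congr rfl fun w _ => ?_
  simp only [Set.indicator_apply, Set.mem_prod, Set.mem_ofPred_eq]
  split_ifs <;> ring

end Scheme

lemma tendsto_iidProb_marginals_mem {U V : Type} [Fintype U] [Fintype V] {P : U × V → ℝ}
    (hP : IsPMF P) {s : Set (U → ℝ)} {t : Set (V → ℝ)} (hs : s ∈ 𝓝 (margU P))
    (ht : t ∈ 𝓝 (margV P)) :
    Tendsto (fun n : ℕ => iidProb P {w : Fin n → U × V |
      empirical (fun i => (w i).1) ∈ s ∧ empirical (fun i => (w i).2) ∈ t}) atTop (𝓝 1) := by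
  have hnhds : {π | margU π ∈ s ∧ margV π ∈ t} ∈ 𝓝 P :=
    inter_mem (continuous_margU.continuousAt hs) (continuous_margV.continuousAt ht)
  simpa only [Set.mem_ofPred_eq, margU_empirical, margV_empirical] using
    tendsto_iidProb_empirical_mem hP hnhds

lemma one_sub_one_sub_pow_mem_Ioc {γ : ℝ} {k : ℕ} (hk : k ≠ 0) (hγ : 0 < γ) (hγ_one : γ ≤ 1) :
    1 - (1 - γ) ^ k ∈ Set.Ioc 0 1 :=
  ⟨sub_pos.2 (pow_lt_one₀ (sub_nonneg.2 hγ_one) (sub_lt_self 1 hγ) hk),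
    sub_le_self 1 (pow_nonneg (sub_nonneg.2 hγ_one) k)⟩

lemma le_liminf_neg_logb_mul_iidProb {A : Type} [Fintype A] {Q : A → ℝ} (hQ : ∀ a, 0 < Q a)
    {S : ∀ n, Set (Fin n → A)} (hS_ne : ∀ᶠ n in atTop, (S n).Nonempty) {c : ℝ}
    (hc : c ∈ Set.Ioc 0 1) {θ θ' : ℝ} (hθ : θ < θ')
    (hS : ∀ n, n ≠ 0 → ∀ w ∈ S n, θ' ≤ klDiv2 (empirical w) Q) :
    θ ≤ liminf (fun n : ℕ => -(1 / (n : ℝ)) * Real.logb 2 (c * iidProb Q (S n))) atTop := by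
  obtain ⟨q, hq, hqQ⟩ := Pi.exists_forall_pos_add_lt hQ
  simp only [zero_add] at hqQ
  refine le_liminf_neg_logb_div (mul_pos hc.1 hq) ?_ ?_
  · filter_upwards [hS_ne, eventually_ne_atTop 0] with n hne hn
    calc (c * q) ^ n = c ^ n * q ^ n := mul_pow c q n
      _ ≤ c * iidProb Q (S n) := mul_le_mul (pow_le_of_le_one hc.1.le hc.2 hn)
          (pow_le_iidProb hq.le (fun a => (hqQ a).le) hne) (by positivity) hc.1.le
  · filter_upwards [eventually_iidProb_le_two_rpow hQ hθ hS] with n hn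
    exact (mul_le_of_le_one_left (iidProb_nonneg (fun a => (hQ a).le) _) hc.2).trans hn

/-- With a fixed finite number `k ≥ 1` of channel uses, if the
DMC admits `x₀, x₁, y*` with `Γ(y*|x₀) > 0` and `Γ(y*|x₁) = 0`, and
`ε ≥ (1 − Γ(y*|x₀))^k`, then every exponent
`θ < min { D(π_{UV} ‖ Q_{UV}) : π_U = P_U, π_V = P_V }` is `ε`-achievable using
exactly `k` channel uses at every blocklength. -/
theorem stein_finite_k_achievability
    {U V X Y : Type} [Fintype U] [Fintype V] [Fintype X] [Fintype Y]
    (P Q : U × V → ℝ) (hP : IsPMF P) (hQ : IsPMF Q) (hQpos : ∀ p : U × V, 0 < Q p)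
    (Γ : X → Y → ℝ) (hΓ : ∀ x, IsPMF (Γ x))
    (k : ℕ) (hk : 1 ≤ k)
    (x₀ x₁ : X) (ystar : Y)
    (h₀ : 0 < Γ x₀ ystar) (h₁ : Γ x₁ ystar = 0)
    (ε : ℝ) (hε : (1 - Γ x₀ ystar) ^ k ≤ ε)
    (θ : ℝ) (hθ : θ < minDivMarg Q (margU P) (margV P)) :
    ∃ (f : ∀ n : ℕ, (Fin n → U) → Fin k → X)
      (g : ∀ n : ℕ, (Fin n → V) → (Fin k → Y) → Bool),
      limsup (fun n : ℕ => decProb P Γ (f n) (g n) true) atTop ≤ ε ∧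
      θ ≤ liminf (fun n : ℕ =>
        -(1 / (n : ℝ)) * Real.logb 2 (decProb Q Γ (f n) (g n) false)) atTop := by
  obtain ⟨θ', hθθ', hθ'⟩ := exists_between hθ
  obtain ⟨s, hs, t, ht, hst⟩ := mem_nhds_prod_iff.1
    (eventually_lt_klDiv2_of_lt_minDivMarg hQpos hθ')
  let E (n : ℕ) : Set (Fin n → U × V) :=
    {w | empirical (fun i => (w i).1) ∈ s ∧ empirical (fun i => (w i).2) ∈ t}
  have hE : Tendsto (fun n => iidProb P (E n)) atTop (𝓝 1) :=
    tendsto_iidProb_marginals_mem hP hs ht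
  have hE_div (n : ℕ) (hn : n ≠ 0) (w) (hw : w ∈ E n) : θ' ≤ klDiv2 (empirical w) Q :=
    (hst (a := (empirical fun i => (w i).1, empirical fun i => (w i).2)) hw _
      (isPMF_empirical hn w) (Prod.ext (margU_empirical w) (margV_empirical w))).le
  let f (n : ℕ) := flagEncoder k x₀ x₁ {u : Fin n → U | empirical u ∈ s}
  let g (n : ℕ) := flagDecoder k ystar {v : Fin n → V | empirical v ∈ t}
  have haccept (R : U × V → ℝ) (n : ℕ) : decProb R Γ (f n) (g n) false =
      (1 - (1 - Γ x₀ ystar) ^ k) * iidProb R (E n) := decProb_flag_false (hΓ x₀) (hΓ x₁) h₁ R _ _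
  refine ⟨f, g, ?_, ?_⟩
  · have hreject (n : ℕ) := eq_sub_of_add_eq (decProb_true_add_decProb_false hP hΓ (f n) (g n))
    simp only [hreject, haccept]
    exact ((hE.const_mul _).const_sub 1).limsup_eq.trans_le (by linarith)
  · simp only [haccept]
    exact le_liminf_neg_logb_mul_iidProb hQpos
      ((hE.eventually_ne one_ne_zero).mono fun n => nonempty_of_iidProb_ne_zero)
      (one_sub_one_sub_pow_mem_Ioc (Nat.ne_zero_of_lt hk) h₀ ((hΓ x₀).le_one ystar)) hθθ' hE_div
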